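/- arXiv:2512.09295 — 2 statements merged into one kernel-verified Lean document; each statement's English description precedes it below -/
import Mathlib

section
/- Let X be a real random variable with distribution P, Z a standard Gaussian independent of X, σ > 0, and Y = X + σZ with distribution Q having a positive, continuously differentiable density q. Assume E[(q'(Y)/q(Y))²] < ∞ and that the integration-by-parts identities ∫ h'(y) q(y) dy = −∫ h(y) q'(y) dy hold for h(y) = σ² q'(y)/q(y) (boundary terms vanish). Then for the Bayes-optimal shrinkage h(y) = σ² q'(y)/q(y), the mean squared error satisfies E[(Y + h(Y) − X)²] = σ² − σ⁴ E[(q'(Y)/q(Y))²], which is strictly less than σ² whenever E[(q'(Y)/q(Y))²] > 0. -/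
open MeasureTheory ProbabilityTheory Filter

/-!
Write `W = σ Z`. Conditionally on `Y`, the signal `X` has density proportional to
`x ↦ φ_{σ²}(Y - x)` with respect to `P`, and differentiating the Gaussian kernel in `Y` brings down
the factor `-(Y - x) / σ²`; hence `E[W | Y] = -σ² (q' / q)(Y)` (Tweedie's formula). The error of the
shrinkage estimator is therefore `W - E[W | Y]`, whose second moment is `E[W²] - E[E[W | Y]²]`.
Since `E[W | Y]` is square integrable along with `W`, so is the score `(q' / q)(Y)`.
-/

open scoped NNReal ENNReal

section Density

variable {Ω 𝓧 𝓨 E : Type*} {mΩ : MeasurableSpace Ω} {m𝓧 : MeasurableSpace 𝓧}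
  {m𝓨 : MeasurableSpace 𝓨} [NormedAddCommGroup E] [NormedSpace ℝ E] {μ : Measure Ω}

lemma integrable_comp_iff_integrable_smul_of_hasLaw {ν : Measure 𝓧} {X : Ω → 𝓧} {d : 𝓧 → ℝ}
    (hd : Measurable d) (hd0 : ∀ x, 0 ≤ d x)
    (hX : HasLaw X (ν.withDensity fun x => ENNReal.ofReal (d x)) μ)
    {f : 𝓧 → E} (hf : StronglyMeasurable f) :
    Integrable (fun ω => f (X ω)) μ ↔ Integrable (fun x => d x • f x) ν := by
  have hmap := integrable_map_measure hf.aestronglyMeasurable (f := X) (μ := μ) hX.aemeasurable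
  rw [hX.map_eq, integrable_withDensity_iff_integrable_smul' hd.ennreal_ofReal (by simp)] at hmap
  simpa only [ENNReal.toReal_ofReal (hd0 _), Function.comp_def] using hmap.symm

lemma setIntegral_comp_eq_setIntegral_smul_of_hasLaw {ν : Measure 𝓧} {X : Ω → 𝓧} {d : 𝓧 → ℝ}
    (hd : Measurable d) (hd0 : ∀ x, 0 ≤ d x)
    (hX : HasLaw X (ν.withDensity fun x => ENNReal.ofReal (d x)) μ)
    {f : 𝓧 → E} (hf : StronglyMeasurable f) {s : Set 𝓧} (hs : MeasurableSet s) :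
    ∫ ω in X ⁻¹' s, f (X ω) ∂μ = ∫ x in s, d x • f x ∂ν := by
  rw [← setIntegral_map hs hf.aestronglyMeasurable hX.aemeasurable, hX.map_eq,
    setIntegral_withDensity_eq_setIntegral_toReal_smul hd.ennreal_ofReal (by simp) _ hs]
  simp only [ENNReal.toReal_ofReal (hd0 _)]

lemma integrable_of_hasLaw_withDensity [IsFiniteMeasure μ] {ν : Measure 𝓧} {X : Ω → 𝓧}
    {d : 𝓧 → ℝ} (hd : Measurable d) (hd0 : ∀ x, 0 ≤ d x)
    (hX : HasLaw X (ν.withDensity fun x => ENNReal.ofReal (d x)) μ) : Integrable d ν := by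
  simpa using (integrable_comp_iff_integrable_smul_of_hasLaw hd hd0 hX
    (stronglyMeasurable_const (b := (1 : ℝ)))).1 (integrable_const 1)

lemma integral_smul_inv_integral_smul_integral_smul {P : Measure 𝓧} {d : 𝓧 → ℝ}
    (hd : Integrable d P) (hd0 : ∀ x, 0 ≤ d x) (f : 𝓧 → E) :
    (∫ x, d x ∂P) • (∫ x, d x ∂P)⁻¹ • ∫ x, d x • f x ∂P = ∫ x, d x • f x ∂P := by
  -- `0⁻¹ = 0` does no harm: where the normalising integral vanishes, so does the numerator.
  by_cases hD : ∫ x, d x ∂P = 0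
  · have hd_zero : d =ᵐ[P] 0 := (integral_eq_zero_iff_of_nonneg hd0 hd).1 hD
    have hN : ∫ x, d x • f x ∂P = 0 := integral_eq_zero_of_ae <| by
      filter_upwards [hd_zero] with x hx using by simp [hx]
    simp [hN]
  · exact smul_inv_smul₀ hD _

variable {P : Measure 𝓧} {ν : Measure 𝓨} [SFinite P] [SFinite ν] {X : Ω → 𝓧} {Y : Ω → 𝓨}
  {k : 𝓧 × 𝓨 → ℝ}

lemma hasLaw_snd_of_hasLaw_prodMk_withDensity [IsFiniteMeasure μ] (hk : Measurable k)
    (hk0 : ∀ p, 0 ≤ k p)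
    (hXY : HasLaw (fun ω => (X ω, Y ω))
      ((P.prod ν).withDensity fun p => ENNReal.ofReal (k p)) μ) :
    HasLaw Y (ν.withDensity fun y => ENNReal.ofReal (∫ x, k (x, y) ∂P)) μ := by
  refine HasLaw.fun_comp (Y := Prod.snd) ⟨by fun_prop, ?_⟩ hXY
  have hk_int := integrable_of_hasLaw_withDensity hk hk0 hXY
  ext s hs
  rw [Measure.map_apply measurable_snd hs, withDensity_apply _ (measurable_snd hs),
    withDensity_apply _ hs, ← Set.univ_prod, ← Measure.prod_restrict, Measure.restrict_univ,
    lintegral_prod_symm' _ (by fun_prop)]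
  refine lintegral_congr_ae (ae_restrict_of_ae ?_)
  filter_upwards [hk_int.prod_left_ae] with y hy
  exact (ofReal_integral_eq_lintegral_ofReal hy (ae_of_all _ fun x => hk0 (x, y))).symm

theorem condExp_comap_ae_eq_inv_integral_smul_integral [CompleteSpace E] [IsFiniteMeasure μ]
    (hY : Measurable Y) (hk : Measurable k) (hk0 : ∀ p, 0 ≤ k p)
    (hXY : HasLaw (fun ω => (X ω, Y ω))
      ((P.prod ν).withDensity fun p => ENNReal.ofReal (k p)) μ)
    {f : 𝓧 × 𝓨 → E} (hf : StronglyMeasurable f) (hfint : Integrable (fun ω => f (X ω, Y ω)) μ) :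
    μ[fun ω => f (X ω, Y ω) | m𝓨.comap Y] =ᵐ[μ]
      fun ω => (∫ x, k (x, Y ω) ∂P)⁻¹ • ∫ x, k (x, Y ω) • f (x, Y ω) ∂P := by
  set D : 𝓨 → ℝ := fun y => ∫ x, k (x, y) ∂P
  set N : 𝓨 → E := fun y => ∫ x, k (x, y) • f (x, y) ∂P
  have hkf : StronglyMeasurable fun p => k p • f p := hk.stronglyMeasurable.smul hf
  have hD : StronglyMeasurable D := hk.stronglyMeasurable.integral_prod_left'
  have hN : StronglyMeasurable N := hkf.integral_prod_left'
  have hr : StronglyMeasurable fun y => (D y)⁻¹ • N y := hD.inv₀.smul hN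
  have hYlaw := hasLaw_snd_of_hasLaw_prodMk_withDensity hk hk0 hXY
  have hD0 : ∀ y, 0 ≤ D y := fun y => integral_nonneg fun x => hk0 (x, y)
  have hkf_int : Integrable (fun p => k p • f p) (P.prod ν) :=
    (integrable_comp_iff_integrable_smul_of_hasLaw hk hk0 hXY hf).1 hfint
  have hDr : (fun y => D y • (D y)⁻¹ • N y) =ᵐ[ν] N := by
    filter_upwards [(integrable_of_hasLaw_withDensity hk hk0 hXY).prod_left_ae] with y hy
    exact integral_smul_inv_integral_smul_integral_smul hy (fun x => hk0 (x, y)) _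
  have hr_int : Integrable (fun ω => (D (Y ω))⁻¹ • N (Y ω)) μ :=
    (integrable_comp_iff_integrable_smul_of_hasLaw hD.measurable hD0 hYlaw hr).2
      (hkf_int.integral_prod_right.congr hDr.symm)
  refine (ae_eq_condExp_of_forall_setIntegral_eq hY.comap_le hfint
    (fun _ _ _ => hr_int.integrableOn) ?_ ?_).symm
  · rintro _ ⟨B, hB, rfl⟩ -
    calc ∫ ω in Y ⁻¹' B, (D (Y ω))⁻¹ • N (Y ω) ∂μ
        = ∫ y in B, D y • (D y)⁻¹ • N y ∂ν :=
          setIntegral_comp_eq_setIntegral_smul_of_hasLaw hD.measurable hD0 hYlaw hr hB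
      _ = ∫ y in B, N y ∂ν := integral_congr_ae (ae_restrict_of_ae hDr)
      _ = ∫ p in Set.univ ×ˢ B, k p • f p ∂P.prod ν := by
          rw [← Measure.prod_restrict, Measure.restrict_univ, integral_prod_symm]
          exact hkf_int.mono_measure (Measure.prod_mono le_rfl Measure.restrict_le_self)
      _ = ∫ ω in Y ⁻¹' B, f (X ω, Y ω) ∂μ := by
          rw [← setIntegral_comp_eq_setIntegral_smul_of_hasLaw hk hk0 hXY hf
            (MeasurableSet.univ.prod hB), Set.mk_preimage_prod, Set.preimage_univ, Set.univ_inter]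
  · exact (hr.comp_measurable (comap_measurable Y)).aestronglyMeasurable

end Density

section Translation

lemma hasLaw_withDensity_comp {α β : Type*} {mα : MeasurableSpace α} {mβ : MeasurableSpace β}
    {μ : Measure α} {ν : Measure β} {f : α → β} (hf : MeasurePreserving f μ ν) {g : β → ℝ≥0∞}
    (hg : Measurable g) : HasLaw f (ν.withDensity g) (μ.withDensity fun x => g (f x)) where
  aemeasurable := hf.measurable.aemeasurable
  map_eq := by
    ext s hs
    rw [Measure.map_apply hf.measurable hs, withDensity_apply _ (hf.measurable hs),
      withDensity_apply _ hs, hf.setLIntegral_comp_preimage hs hg]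

lemma hasLaw_prodMk_add_withDensity {Ω G : Type*} {mΩ : MeasurableSpace Ω} [AddGroup G]
    {mG : MeasurableSpace G} [MeasurableAdd₂ G] [MeasurableNeg G] {μ : Measure Ω}
    [IsFiniteMeasure μ] {ν : Measure G} [SFinite ν] [ν.IsAddLeftInvariant] {X W : Ω → G}
    (hX : AEMeasurable X μ) {g : G → ℝ≥0∞} (hg : Measurable g)
    (hW : HasLaw W (ν.withDensity g) μ) (hXW : IndepFun X W μ) :
    HasLaw (fun ω => (X ω, X ω + W ω))
      (((μ.map X).prod ν).withDensity fun p => g (-p.1 + p.2)) μ := by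
  have hprod := (indepFun_iff_hasLaw_prodMk_prod ⟨hX, rfl⟩ hW).1 hXW
  rw [prod_withDensity_right hg] at hprod
  have hshear := hasLaw_withDensity_comp (measurePreserving_prod_add (μ.map X) ν)
    (g := fun p => g (-p.1 + p.2)) (by fun_prop)
  simp only [neg_add_cancel_left] at hshear
  exact hshear.fun_comp hprod

end Translation

lemma integral_sq_sub_condExp {Ω : Type*} {m mΩ : MeasurableSpace Ω} {μ : Measure Ω}
    [IsFiniteMeasure μ] (hm : m ≤ mΩ) {W : Ω → ℝ} (hW : MemLp W 2 μ) :
    ∫ ω, (W ω - (μ[W | m]) ω) ^ 2 ∂μ = ∫ ω, W ω ^ 2 ∂μ - ∫ ω, (μ[W | m]) ω ^ 2 ∂μ := by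
  have hE := hW.condExp (m := m) one_le_two
  calc ∫ ω, (W ω - (μ[W | m]) ω) ^ 2 ∂μ
      = ∫ ω, (Var[W; μ | m]) ω ∂μ := (integral_condExp hm).symm
    _ = ∫ ω, (μ[W ^ 2 | m] - μ[W | m] ^ 2 : Ω → ℝ) ω ∂μ :=
        integral_congr_ae (condVar_ae_eq_condExp_sq_sub_sq_condExp hm hW)
    _ = ∫ ω, (μ[W ^ 2 | m]) ω ∂μ - ∫ ω, (μ[W | m]) ω ^ 2 ∂μ :=
        integral_sub integrable_condExp hE.integrable_sq
    _ = ∫ ω, W ω ^ 2 ∂μ - ∫ ω, (μ[W | m]) ω ^ 2 ∂μ := by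
        rw [integral_condExp hm]; rfl

section Gaussian

lemma hasDerivAt_gaussianPDFReal (m : ℝ) (v : ℝ≥0) (y : ℝ) :
    HasDerivAt (gaussianPDFReal m v) (-((y - m) / v) * gaussianPDFReal m v y) y := by
  have hexponent : HasDerivAt (fun t : ℝ => -(t - m) ^ 2 / (2 * v)) (-((y - m) / v)) y := by
    refine (((((hasDerivAt_id y).sub_const m).pow 2).neg).div_const (2 * (v : ℝ))).congr_deriv ?_
    simp only [id, Nat.cast_ofNat, Nat.add_one_sub_one, pow_one, mul_one]
    rw [← mul_neg, mul_div_mul_left _ _ two_ne_zero, neg_div]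
  rw [gaussianPDFReal_def]
  exact (hexponent.exp.const_mul _).congr_deriv (by ring)

lemma gaussianPDFReal_le (m : ℝ) (v : ℝ≥0) (y : ℝ) :
    gaussianPDFReal m v y ≤ (√(2 * Real.pi * v))⁻¹ := by
  refine mul_le_of_le_one_right (by positivity) (Real.exp_le_one_iff.2 ?_)
  exact div_nonpos_of_nonpos_of_nonneg (neg_nonpos.2 (sq_nonneg _)) (by positivity)

lemma abs_sub_mul_gaussianPDFReal_le (m : ℝ) (v : ℝ≥0) (y : ℝ) :
    |y - m| * gaussianPDFReal m v y ≤ (√(2 * Real.pi))⁻¹ := by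
  obtain rfl | hv := eq_or_ne v 0
  · simp
  have hv0 : 0 < √(v : ℝ) := by positivity
  have habs : |y - m| ≤ √v * Real.exp ((y - m) ^ 2 / (2 * v)) := by
    set t := |y - m| / √v
    calc |y - m| = √v * t := (mul_div_cancel₀ _ hv0.ne').symm
      _ ≤ √v * (t ^ 2 / 2 + 1) := by gcongr; nlinarith [sq_nonneg (t - 1)]
      _ = √v * ((y - m) ^ 2 / (2 * v) + 1) := by
          rw [div_pow, sq_abs, Real.sq_sqrt v.coe_nonneg, div_div, mul_comm (v : ℝ) 2]
      _ ≤ √v * Real.exp ((y - m) ^ 2 / (2 * v)) := by gcongr; exact Real.add_one_le_exp _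
  calc |y - m| * gaussianPDFReal m v y
      ≤ √v * Real.exp ((y - m) ^ 2 / (2 * v)) * gaussianPDFReal m v y := by
        gcongr; exact gaussianPDFReal_nonneg _ _ _
    _ = (√(2 * Real.pi))⁻¹ := by
        rw [gaussianPDFReal, neg_div, Real.exp_neg, Real.sqrt_mul (by positivity)]
        field_simp

/-- The density `y ↦ ∫ φ_v(y - x) dP(x)` of the convolution of `P` with the centred Gaussian of
variance `v`, i.e. the marginal density of a noisy observation of a signal with law `P`. The kernel
is written as the Gaussian density with mean `x`. -/
noncomputable def gaussianMixturePDFReal (P : Measure ℝ) (v : ℝ≥0) (y : ℝ) : ℝ :=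
  ∫ x, gaussianPDFReal x v y ∂P

lemma gaussianMixturePDFReal_nonneg (P : Measure ℝ) (v : ℝ≥0) (y : ℝ) :
    0 ≤ gaussianMixturePDFReal P v y :=
  integral_nonneg fun x => gaussianPDFReal_nonneg x v y

lemma hasDerivAt_gaussianMixturePDFReal (P : Measure ℝ) [IsFiniteMeasure P] (v : ℝ≥0) (y : ℝ) :
    HasDerivAt (gaussianMixturePDFReal P v)
      (∫ x, -((y - x) / v) * gaussianPDFReal x v y ∂P) y := by
  refine (hasDerivAt_integral_of_dominated_loc_of_deriv_le univ_mem
    (bound := fun _ => (√(2 * Real.pi))⁻¹ / v) ?_ ?_ ?_ ?_ (integrable_const _)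
    (ae_of_all _ fun x y _ => hasDerivAt_gaussianPDFReal x v y)).2
  · exact Eventually.of_forall fun y => Measurable.aestronglyMeasurable (by fun_prop)
  · refine .of_bound (Measurable.aestronglyMeasurable (by fun_prop)) (√(2 * Real.pi * v))⁻¹
      (ae_of_all _ fun x => ?_)
    simpa only [Real.norm_of_nonneg (gaussianPDFReal_nonneg x v y)] using gaussianPDFReal_le x v y
  · exact Measurable.aestronglyMeasurable (by fun_prop)
  · refine ae_of_all _ fun x y _ => ?_
    rw [norm_mul, norm_neg, norm_div, Real.norm_of_nonneg (gaussianPDFReal_nonneg x v y),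
      Real.norm_of_nonneg v.coe_nonneg, Real.norm_eq_abs, div_mul_eq_mul_div]
    gcongr
    exact abs_sub_mul_gaussianPDFReal_le x v y

lemma continuous_gaussianMixturePDFReal (P : Measure ℝ) [IsFiniteMeasure P] (v : ℝ≥0) :
    Continuous (gaussianMixturePDFReal P v) :=
  continuous_iff_continuousAt.2 fun y => (hasDerivAt_gaussianMixturePDFReal P v y).continuousAt

variable {Ω : Type*} {mΩ : MeasurableSpace Ω} {μ : Measure Ω} {X W : Ω → ℝ} {v : ℝ≥0}

lemma integral_sq_of_hasLaw_gaussianReal (hW : HasLaw W (gaussianReal 0 v) μ) :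
    ∫ ω, W ω ^ 2 ∂μ = v := by
  have hmean : ∫ ω, W ω ∂μ = 0 := by rw [hW.integral_eq, integral_id_gaussianReal]
  rw [← variance_id_gaussianReal (μ := 0) (v := v), ← hW.variance_eq,
    variance_of_integral_eq_zero hW.aemeasurable hmean]

section IndepFun

variable [IsFiniteMeasure μ]

lemma hasLaw_prodMk_add_gaussian (hX : AEMeasurable X μ) (hv : v ≠ 0)
    (hW : HasLaw W (gaussianReal 0 v) μ) (hXW : IndepFun X W μ) :
    HasLaw (fun ω => (X ω, X ω + W ω)) (((μ.map X).prod volume).withDensity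
      fun p => ENNReal.ofReal (gaussianPDFReal p.1 v p.2)) μ := by
  rw [gaussianReal_of_var_ne_zero 0 hv] at hW
  have hlaw := hasLaw_prodMk_add_withDensity hX (measurable_gaussianPDF 0 v) hW hXW
  simpa only [gaussianPDF, neg_add_eq_sub, gaussianPDFReal_sub, zero_add] using hlaw

lemma eq_gaussianMixturePDFReal_of_hasLaw_add (hX : AEMeasurable X μ) (hv : v ≠ 0)
    (hW : HasLaw W (gaussianReal 0 v) μ) (hXW : IndepFun X W μ) {q : ℝ → ℝ} (hq : Continuous q)
    (hq0 : ∀ y, 0 ≤ q y)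
    (hXW_law : HasLaw (fun ω => X ω + W ω) (volume.withDensity fun y => ENNReal.ofReal (q y)) μ) :
    q = gaussianMixturePDFReal (μ.map X) v := by
  have hmix := continuous_gaussianMixturePDFReal (μ.map X) v
  have hmix_law := hasLaw_snd_of_hasLaw_prodMk_withDensity (by fun_prop)
    (fun p => gaussianPDFReal_nonneg _ _ _) (hasLaw_prodMk_add_gaussian hX hv hW hXW)
  have hae := (withDensity_eq_iff_of_sigmaFinite hq.measurable.ennreal_ofReal.aemeasurable
    hmix.measurable.ennreal_ofReal.aemeasurable).1 (hXW_law.map_eq.symm.trans hmix_law.map_eq)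
  refine (hq.ae_eq_iff_eq volume hmix).1 ?_
  filter_upwards [hae] with y hy
  exact (ENNReal.ofReal_eq_ofReal_iff (hq0 y) (gaussianMixturePDFReal_nonneg _ v y)).1 hy

theorem tweedie_condExp (hX : Measurable X) (hWm : Measurable W) (hv : v ≠ 0)
    (hW : HasLaw W (gaussianReal 0 v) μ) (hXW : IndepFun X W μ) :
    μ[W | MeasurableSpace.comap (fun ω => X ω + W ω) inferInstance] =ᵐ[μ]
      fun ω => -(v * logDeriv (gaussianMixturePDFReal (μ.map X) v) (X ω + W ω)) := by
  set f := gaussianMixturePDFReal (μ.map X) v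
  have hW_int : Integrable W μ := hW.hasGaussianLaw.integrable
  have hposterior := condExp_comap_ae_eq_inv_integral_smul_integral
    (f := fun p : ℝ × ℝ => p.2 - p.1) (hX.add hWm) (by fun_prop)
    (fun p => gaussianPDFReal_nonneg _ _ _) (hasLaw_prodMk_add_gaussian hX.aemeasurable hv hW hXW)
    (by fun_prop) (by simpa only [Pi.add_apply, add_sub_cancel_left] using hW_int)
  simp only [Pi.add_apply, add_sub_cancel_left] at hposterior
  have hnumerator (y : ℝ) :
      ∫ x, gaussianPDFReal x v y • (y - x) ∂μ.map X = -(v * deriv f y) := by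
    rw [(hasDerivAt_gaussianMixturePDFReal _ v y).deriv, ← integral_const_mul, ← integral_neg]
    congr with x
    rw [smul_eq_mul]
    field_simp
  refine hposterior.trans (ae_of_all _ fun ω => ?_)
  change (f (X ω + W ω))⁻¹ • ∫ x, gaussianPDFReal x v (X ω + W ω) • (X ω + W ω - x) ∂μ.map X
    = -(v * logDeriv f (X ω + W ω))
  rw [hnumerator, smul_eq_mul, logDeriv_apply]
  ring

lemma memLp_two_logDeriv_gaussianMixturePDFReal (hX : Measurable X) (hWm : Measurable W)
    (hv : v ≠ 0) (hW : HasLaw W (gaussianReal 0 v) μ) (hXW : IndepFun X W μ) :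
    MemLp (fun ω => logDeriv (gaussianMixturePDFReal (μ.map X) v) (X ω + W ω)) 2 μ := by
  have hE := hW.hasGaussianLaw.memLp_two.condExp
    (m := MeasurableSpace.comap (fun ω => X ω + W ω) inferInstance) one_le_two
  refine (memLp_congr_ae ?_).1 (hE.const_mul (-(v : ℝ)⁻¹))
  filter_upwards [tweedie_condExp hX hWm hv hW hXW] with ω htweedie
  rw [htweedie]
  field_simp

lemma integral_sq_add_mul_logDeriv_gaussianMixturePDFReal (hX : Measurable X) (hWm : Measurable W)
    (hv : v ≠ 0) (hW : HasLaw W (gaussianReal 0 v) μ) (hXW : IndepFun X W μ) :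
    ∫ ω, (W ω + v * logDeriv (gaussianMixturePDFReal (μ.map X) v) (X ω + W ω)) ^ 2 ∂μ
      = v - v ^ 2 * ∫ ω, logDeriv (gaussianMixturePDFReal (μ.map X) v) (X ω + W ω) ^ 2 ∂μ := by
  set s := logDeriv (gaussianMixturePDFReal (μ.map X) v)
  set E := μ[W | MeasurableSpace.comap (fun ω => X ω + W ω) inferInstance]
  have htweedie : E =ᵐ[μ] fun ω => -(v * s (X ω + W ω)) := tweedie_condExp hX hWm hv hW hXW
  calc ∫ ω, (W ω + v * s (X ω + W ω)) ^ 2 ∂μ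
      = ∫ ω, (W ω - E ω) ^ 2 ∂μ := by
        refine integral_congr_ae ?_
        filter_upwards [htweedie] with ω hω
        rw [hω, sub_neg_eq_add]
    _ = v - ∫ ω, E ω ^ 2 ∂μ := by
        rw [← integral_sq_of_hasLaw_gaussianReal hW]
        exact integral_sq_sub_condExp (hX.add hWm).comap_le hW.hasGaussianLaw.memLp_two
    _ = v - v ^ 2 * ∫ ω, s (X ω + W ω) ^ 2 ∂μ := by
        rw [← integral_const_mul]
        congr 1
        refine integral_congr_ae ?_
        filter_upwards [htweedie] with ω hω
        rw [hω, neg_sq, mul_pow]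

end IndepFun

end Gaussian

theorem bayes_shrinkage_mse_general
    {Ω : Type*} {mΩ : MeasurableSpace Ω} {μ : Measure Ω} [IsProbabilityMeasure μ]
    {X Z Y : Ω → ℝ} (hX : Measurable X) (hZ : Measurable Z) (hZlaw : μ.map Z = gaussianReal 0 1)
    (hXZ : IndepFun X Z μ) {σ : ℝ} (hσ : σ ≠ 0) (hY : ∀ ω, Y ω = X ω + σ * Z ω)
    {q : ℝ → ℝ} (hq0 : ∀ y, 0 ≤ q y) (hq : Continuous q)
    (hQ : μ.map Y = volume.withDensity fun y => ENNReal.ofReal (q y)) :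
    Integrable (fun ω => (deriv q (Y ω) / q (Y ω)) ^ 2) μ ∧
      ∫ ω, (Y ω + σ ^ 2 * (deriv q (Y ω) / q (Y ω)) - X ω) ^ 2 ∂μ
        = σ ^ 2 - σ ^ 4 * ∫ ω, (deriv q (Y ω) / q (Y ω)) ^ 2 ∂μ := by
  obtain rfl : Y = fun ω => X ω + σ * Z ω := funext hY
  let v : ℝ≥0 := .mk (σ ^ 2) (sq_nonneg σ)
  have hv : v ≠ 0 := fun h => hσ (pow_eq_zero_iff two_ne_zero |>.1 (congrArg NNReal.toReal h))
  have hWm : Measurable fun ω => σ * Z ω := hZ.const_mul σ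
  have hW : HasLaw (fun ω => σ * Z ω) (gaussianReal 0 v) μ := by
    simpa only [mul_zero, mul_one] using gaussianReal_const_mul ⟨hZ.aemeasurable, hZlaw⟩ σ
  have hXW : IndepFun X (fun ω => σ * Z ω) μ := hXZ.comp measurable_id (measurable_const_mul σ)
  obtain rfl : q = gaussianMixturePDFReal (μ.map X) v :=
    eq_gaussianMixturePDFReal_of_hasLaw_add hX.aemeasurable hv hW hXW hq hq0
      ⟨(hX.add hWm).aemeasurable, hQ⟩
  refine ⟨(memLp_two_logDeriv_gaussianMixturePDFReal hX hWm hv hW hXW).integrable_sq, ?_⟩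
  have hmse := integral_sq_add_mul_logDeriv_gaussianMixturePDFReal hX hWm hv hW hXW
  simp only [logDeriv_apply, v, NNReal.coe_mk, ← pow_mul, Nat.reduceMul] at hmse
  simpa only [add_assoc, add_sub_cancel_left] using hmse

/-- **Bayes-optimal shrinkage beats the trivial denoiser in MSE.**
For `Y = X + σ Z` with density `q`, the shrinkage `h(y) = σ² q'(y)/q(y)` achieves
`E[(Y + h(Y) − X)²] = σ² − σ⁴ E[(q'(Y)/q(Y))²] < σ²` whenever `E[(q'(Y)/q(Y))²] > 0`. -/
theorem bayes_shrinkage_mse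
    {Ω : Type*} [MeasureSpace Ω] [IsProbabilityMeasure (ℙ : Measure Ω)]
    (X Z : Ω → ℝ) (hXm : Measurable X) (hZm : Measurable Z)
    (hZlaw : Measure.map Z ℙ = gaussianReal 0 1)
    (hXZ : IndepFun X Z ℙ)
    (σ : ℝ) (hσ : 0 < σ)
    (Y : Ω → ℝ) (hY : ∀ ω, Y ω = X ω + σ * Z ω)
    (q : ℝ → ℝ) (hqpos : ∀ y, 0 < q y) (hqC1 : ContDiff ℝ 1 q)
    (hQ : Measure.map Y ℙ = volume.withDensity fun y => ENNReal.ofReal (q y))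
    (hscoreInt : Integrable (fun ω => (deriv q (Y ω) / q (Y ω)) ^ 2) ℙ)
    (h : ℝ → ℝ) (hdef : ∀ y, h y = σ ^ 2 * (deriv q y / q y))
    (hIBP : ∫ y, deriv h y * q y = -∫ y, h y * deriv q y) :
    (∫ ω, (Y ω + h (Y ω) - X ω) ^ 2 ∂ℙ
        = σ ^ 2 - σ ^ 4 * ∫ ω, (deriv q (Y ω) / q (Y ω)) ^ 2 ∂ℙ)
    ∧ (0 < ∫ ω, (deriv q (Y ω) / q (Y ω)) ^ 2 ∂ℙ →
        ∫ ω, (Y ω + h (Y ω) - X ω) ^ 2 ∂ℙ < σ ^ 2) := by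
  have hmse := (bayes_shrinkage_mse_general hXm hZm hZlaw hXZ hσ.ne' hY
    (fun y => (hqpos y).le) hqC1.continuous hQ).2
  simp only [← hdef] at hmse
  exact ⟨hmse, fun hpos => hmse ▸ sub_lt_self _ (by positivity)⟩
end

section
/- Consider the additive Gaussian model Y = X + σZ with η = σ²/2 and cumulative distribution functions F, G of X, Y. Assume F is infinitely differentiable with F^{(1)} > 0, and define functions g_k : ℝ → ℝ recursively by g₁ = F^{(2)}/F^{(1)} and, for k ≥ 2, g_k = −Σ_{j=2}^{k} (F^{(j)}/F^{(1)}) · B_{k,j}(g₁,…,g_{k−j+1}) + F^{(2k)}/F^{(1)}. Define T_F(y) = y + Σ_{k=1}^∞ (η^k/k!) g_k(y). Then for every y at which the series T_F(y) converges absolutely, F itself is represented by its everywhere-convergent Taylor series at y, and G(y) = Σ_{k≥0}(η^k/k!) F^{(2k)}(y) with all rearrangements absolutely convergent, one has F(T_F(y)) = G(y); in particular T_F(y) = F^{-1}(G(y)), the optimal transport map pushing Q onto P. -/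
open MeasureTheory ProbabilityTheory Filter

/-- The partial Bell polynomial `B_{n,j}(x₁, …, x_{n−j+1})`. -/
noncomputable def bellPartial (n j : ℕ) (x : ℕ → ℝ) : ℝ :=
  ∑ i ∈ Finset.filter
      (fun i : Fin (n - j + 1) → ℕ =>
        (∑ m, i m) = j ∧ (∑ m, (m.1 + 1) * i m) = n)
      (Fintype.piFinset fun _ => Finset.range (n + 1)),
    (n.factorial : ℝ) / (∏ m, ((i m).factorial : ℝ)) *
      ∏ m, (x (m.1 + 1) / ((m.1 + 1).factorial : ℝ)) ^ i m

/-!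
The recursion for `g` says exactly that `∑ⱼ F⁽ʲ⁾(y) B_{k,j}(g₁, g₂, …) = F⁽²ᵏ⁾(y)` for every `k`.
Since `B_{k,j}` is, up to factorials, the `k`-th coefficient of the `j`-th power of the exponential
generating series of `g`, the double series `∑ F⁽ʲ⁾(y) (η^k/k!) B_{k,j}(g)` sums over `k` first to
the Taylor series of `F` at `y`, evaluated at `T_F(y)`, and over `j` first to the expansion of
`G(y)`. Absolute convergence makes the two sums equal, and a strictly increasing `F` can be
inverted.
-/

section PowerSeriesCoefficients

open PowerSeries

variable {R : Type*} [CommSemiring R]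

theorem coeff_sum_C_mul_X_pow_pow {ι : Type*} [Fintype ι] [DecidableEq ι]
    (a : ι → R) (e : ι → ℕ) (j d : ℕ) :
    coeff d ((∑ m, C (a m) * X ^ e m) ^ j) =
      ∑ i ∈ (Finset.univ.piAntidiag j).filter (fun i : ι → ℕ => ∑ m, e m * i m = d),
        (Nat.multinomial Finset.univ i : R) * ∏ m, a m ^ i m := by
  rw [Finset.sum_pow_eq_sum_piAntidiag, map_sum, Finset.sum_filter]
  refine Finset.sum_congr rfl fun i _ => ?_
  simp only [mul_pow, ← pow_mul, Finset.prod_mul_distrib, Finset.prod_pow_eq_pow_sum, ← map_pow,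
    ← map_prod, ← map_natCast (C (R := R)), coeff_C_mul, coeff_X_pow, eq_comm (a := d)]
  split_ifs <;> simp

theorem coe_trunc_eq_sum_fin (f : R⟦X⟧) (n : ℕ) :
    (trunc n f : R⟦X⟧) = ∑ m : Fin n, C (coeff m f) * X ^ (m : ℕ) := by
  rw [Fin.sum_univ_eq_sum_range fun m => C (coeff m f) * X ^ m]
  ext d
  simp [Polynomial.coeff_coe, coeff_trunc, coeff_X_pow]

theorem coeff_pow_eq_coeff_trunc_pow (f : R⟦X⟧) (j d : ℕ) :
    coeff d (f ^ j) = coeff d ((trunc (d + 1) f : R⟦X⟧) ^ j) := by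
  rw [← coeff_coe_trunc_of_lt d.lt_succ_self, ← trunc_trunc_pow,
    coeff_coe_trunc_of_lt d.lt_succ_self]

theorem coeff_pow_eq_sum_multinomial (f : R⟦X⟧) (j d : ℕ) :
    coeff d (f ^ j) =
      ∑ i ∈ (Finset.univ.piAntidiag j).filter (fun i : Fin (d + 1) → ℕ => ∑ m, m.1 * i m = d),
        (Nat.multinomial Finset.univ i : R) * ∏ m, coeff m.1 f ^ i m := by
  rw [coeff_pow_eq_coeff_trunc_pow, coe_trunc_eq_sum_fin, coeff_sum_C_mul_X_pow_pow]

theorem coeff_mul_mul_pow (A B : R⟦X⟧) (t : R) (n : ℕ) :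
    coeff n (A * B) * t ^ n =
      ∑ kl ∈ Finset.HasAntidiagonal.antidiagonal n,
        (coeff kl.1 A * t ^ kl.1) * (coeff kl.2 B * t ^ kl.2) := by
  rw [coeff_mul, Finset.sum_mul]
  refine Finset.sum_congr rfl fun kl hkl => ?_
  rw [← Finset.HasAntidiagonal.mem_antidiagonal.1 hkl]
  ring

end PowerSeriesCoefficients

section PowerSeriesSums

variable {R : Type*} [NormedCommRing R] {A B : PowerSeries R} {t a b : R}

theorem summable_norm_coeff_mul (hA : Summable fun n => ‖PowerSeries.coeff n A * t ^ n‖)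
    (hB : Summable fun n => ‖PowerSeries.coeff n B * t ^ n‖) :
    Summable fun n => ‖PowerSeries.coeff n (A * B) * t ^ n‖ := by
  simpa only [coeff_mul_mul_pow] using summable_norm_sum_mul_antidiagonal_of_summable_norm hA hB

theorem summable_norm_coeff_pow (hA : Summable fun n => ‖PowerSeries.coeff n A * t ^ n‖) (j : ℕ) :
    Summable fun n => ‖PowerSeries.coeff n (A ^ j) * t ^ n‖ := by
  induction j with
  | zero =>
    refine summable_of_ne_finset_zero (s := {0}) fun n hn => ?_
    simp [PowerSeries.coeff_one, Finset.notMem_singleton.1 hn]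
  | succ j ih => simpa only [pow_succ] using summable_norm_coeff_mul ih hA

theorem hasSum_coeff_mul (hA : Summable fun n => ‖PowerSeries.coeff n A * t ^ n‖)
    (hB : Summable fun n => ‖PowerSeries.coeff n B * t ^ n‖)
    (ha : HasSum (fun n => PowerSeries.coeff n A * t ^ n) a)
    (hb : HasSum (fun n => PowerSeries.coeff n B * t ^ n) b) :
    HasSum (fun n => PowerSeries.coeff n (A * B) * t ^ n) (a * b) := by
  have hsummable := summable_sum_mul_antidiagonal_of_summable_norm' hA ha.summable hB hb.summable
  have cauchy := tsum_mul_tsum_eq_tsum_sum_antidiagonal_of_summable_norm' hA ha.summable hB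
    hb.summable
  simp only [← coeff_mul_mul_pow, ha.tsum_eq, hb.tsum_eq] at hsummable cauchy
  exact cauchy ▸ hsummable.hasSum

theorem hasSum_coeff_pow (hA : Summable fun n => ‖PowerSeries.coeff n A * t ^ n‖)
    (ha : HasSum (fun n => PowerSeries.coeff n A * t ^ n) a) (j : ℕ) :
    HasSum (fun n => PowerSeries.coeff n (A ^ j) * t ^ n) (a ^ j) := by
  induction j with
  | zero =>
    have hsingle := hasSum_single (f := fun n => PowerSeries.coeff n (A ^ 0) * t ^ n) 0
      fun n hn => by simp [PowerSeries.coeff_one, hn]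
    simpa using hsingle
  | succ j ih =>
    simpa only [pow_succ] using hasSum_coeff_mul (summable_norm_coeff_pow hA j) hA ih ha

end PowerSeriesSums

/-- The series `∑ xₘ₊₁ tᵐ / (m + 1)!`, that is, `1 / t` times the exponential generating series of
`x₁, x₂, …`. Dividing by `t` makes its coefficients of degree at most `n - j` carry exactly the
arguments of `bellPartial n j`. -/
noncomputable def bellSeries (x : ℕ → ℝ) : PowerSeries ℝ :=
  PowerSeries.mk fun m => x (m + 1) / ((m + 1).factorial : ℝ)

section BellPolynomials

variable (x : ℕ → ℝ)

theorem coeff_succ_X_mul_bellSeries (n : ℕ) :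
    PowerSeries.coeff (n + 1) (PowerSeries.X * bellSeries x) =
      x (n + 1) / ((n + 1).factorial : ℝ) := by
  rw [PowerSeries.coeff_succ_X_mul, bellSeries, PowerSeries.coeff_mk]

theorem sum_succ_mul_eq_add {N : ℕ} (i : Fin N → ℕ) :
    ∑ m, (m.1 + 1) * i m = ∑ m, m.1 * i m + ∑ m, i m := by
  simp only [add_one_mul, Finset.sum_add_distrib]

theorem bellPartial_eq_zero_of_lt {n j : ℕ} (h : n < j) : bellPartial n j x = 0 := by
  rw [bellPartial, Finset.sum_eq_zero]
  intro i hi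
  obtain ⟨-, hcard, hweight⟩ := Finset.mem_filter.1 hi
  rw [sum_succ_mul_eq_add] at hweight
  omega

theorem bellPartial_index_eq_filter_piAntidiag {n j : ℕ} (h : j ≤ n) :
    (Fintype.piFinset fun _ => Finset.range (n + 1)).filter
        (fun i : Fin (n - j + 1) → ℕ => (∑ m, i m) = j ∧ (∑ m, (m.1 + 1) * i m) = n) =
      (Finset.univ.piAntidiag j).filter (fun i => ∑ m, m.1 * i m = n - j) := by
  ext i
  simp only [Finset.mem_filter, Fintype.mem_piFinset, Finset.mem_range, Finset.mem_piAntidiag,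
    Finset.mem_univ, implies_true, and_true, sum_succ_mul_eq_add]
  change (_ ∧ ∑ m, i m = j ∧ _) ↔ ∑ m, i m = j ∧ _
  refine ⟨fun hi => ⟨hi.2.1, by omega⟩, fun hi => ⟨fun m => ?_, hi.1, by omega⟩⟩
  have hle : i m ≤ ∑ m, i m := Finset.single_le_sum (fun _ _ => Nat.zero_le _) (Finset.mem_univ m)
  omega

theorem factorial_div_prod_factorial_eq_multinomial {ι K : Type*} [Field K] [CharZero K]
    (s : Finset ι) (i : ι → ℕ) :
    ((∑ m ∈ s, i m).factorial : K) / ∏ m ∈ s, ((i m).factorial : K) = Nat.multinomial s i := by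
  have hprod : ∏ m ∈ s, ((i m).factorial : K) ≠ 0 :=
    Finset.prod_ne_zero_iff.2 fun m _ => Nat.cast_ne_zero.2 (i m).factorial_ne_zero
  rw [div_eq_iff hprod, mul_comm]
  exact_mod_cast (Nat.multinomial_spec s i).symm

theorem bellPartial_mul_factorial (n j : ℕ) :
    bellPartial n j x * j.factorial =
      n.factorial * PowerSeries.coeff n ((PowerSeries.X * bellSeries x) ^ j) := by
  rw [mul_pow, PowerSeries.coeff_X_pow_mul']
  split_ifs with h
  · rw [bellPartial, bellPartial_index_eq_filter_piAntidiag h, coeff_pow_eq_sum_multinomial,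
      Finset.sum_mul, Finset.mul_sum]
    refine Finset.sum_congr rfl fun i hi => ?_
    have hcard : ∑ m, i m = j := (Finset.mem_piAntidiag.1 (Finset.mem_filter.1 hi).1).1
    simp only [bellSeries, PowerSeries.coeff_mk]
    rw [← factorial_div_prod_factorial_eq_multinomial, hcard]
    ring
  · rw [bellPartial_eq_zero_of_lt x (not_le.1 h), zero_mul, mul_zero]

theorem bellPartial_zero_zero : bellPartial 0 0 x = 1 := by
  simpa using bellPartial_mul_factorial x 0 0

theorem bellPartial_succ_zero (n : ℕ) : bellPartial (n + 1) 0 x = 0 := by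
  simpa [PowerSeries.coeff_one] using bellPartial_mul_factorial x (n + 1) 0

theorem bellPartial_succ_one (n : ℕ) : bellPartial (n + 1) 1 x = x (n + 1) := by
  have h := bellPartial_mul_factorial x (n + 1) 1
  rwa [pow_one, coeff_succ_X_mul_bellSeries, mul_div_cancel₀ _ (by positivity),
    Nat.factorial_one, Nat.cast_one, mul_one] at h

variable {x}

theorem sum_range_mul_bellPartial_of_recursion {a : ℕ → ℝ} {b : ℝ} {n : ℕ} (ha : a 1 ≠ 0)
    (hx : x (n + 1) =
      -(∑ j ∈ Finset.Icc 2 (n + 1), a j / a 1 * bellPartial (n + 1) j x) + b / a 1) :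
    ∑ j ∈ Finset.range (n + 2), a j * bellPartial (n + 1) j x = b := by
  have hrange : Finset.range (n + 2) = insert 0 (insert 1 (Finset.Icc 2 (n + 1))) := by
    ext j
    simp only [Finset.mem_range, Finset.mem_insert, Finset.mem_Icc]
    omega
  rw [hrange, Finset.sum_insert (by simp), Finset.sum_insert (by simp), bellPartial_succ_zero,
    bellPartial_succ_one, hx]
  simp only [div_mul_eq_mul_div, ← Finset.sum_div]
  field_simp
  ring

theorem hasSum_bellPartial {η S : ℝ}
    (hS : HasSum (fun k : ℕ => η ^ (k + 1) / ((k + 1).factorial : ℝ) * x (k + 1)) S) (j : ℕ) :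
    HasSum (fun n : ℕ => η ^ n / (n.factorial : ℝ) * bellPartial n j x)
      (S ^ j / (j.factorial : ℝ)) := by
  have hcoeff (k : ℕ) : PowerSeries.coeff (k + 1) (PowerSeries.X * bellSeries x) * η ^ (k + 1) =
      η ^ (k + 1) / ((k + 1).factorial : ℝ) * x (k + 1) := by
    rw [coeff_succ_X_mul_bellSeries]
    ring
  have hsum : HasSum (fun n => PowerSeries.coeff n (PowerSeries.X * bellSeries x) * η ^ n) S := by
    rw [← hasSum_nat_add_iff' 1]
    simpa only [hcoeff, Finset.sum_range_one, PowerSeries.coeff_zero_X_mul, zero_mul, sub_zero]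
      using hS
  refine ((hasSum_coeff_pow hsum.summable.norm hsum j).div_const _).congr_fun fun n => ?_
  rw [eq_div_iff (by positivity), mul_assoc, bellPartial_mul_factorial]
  field_simp

theorem hasSum_sum_mul_bellPartial {a : ℕ → ℝ} {η S A : ℝ}
    (hS : HasSum (fun k : ℕ => η ^ (k + 1) / ((k + 1).factorial : ℝ) * x (k + 1)) S)
    (hA : HasSum (fun j : ℕ => a j / (j.factorial : ℝ) * S ^ j) A)
    (hFubini : Summable fun p : ℕ × ℕ =>
      a p.1 * (η ^ p.2 / (p.2.factorial : ℝ)) * bellPartial p.2 p.1 x) :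
    HasSum (fun n : ℕ => η ^ n / (n.factorial : ℝ) *
      ∑ j ∈ Finset.range (n + 1), a j * bellPartial n j x) A := by
  have hrow (j : ℕ) : HasSum
      (fun n : ℕ => a j * (η ^ n / (n.factorial : ℝ)) * bellPartial n j x)
      (a j / (j.factorial : ℝ) * S ^ j) := by
    simpa only [mul_assoc, div_mul_eq_mul_div, mul_div_assoc] using
      (hasSum_bellPartial hS j).mul_left (a j)
  have hcol (n : ℕ) : HasSum
      (fun j : ℕ => a j * (η ^ n / (n.factorial : ℝ)) * bellPartial n j x)
      (η ^ n / (n.factorial : ℝ) * ∑ j ∈ Finset.range (n + 1), a j * bellPartial n j x) := by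
    have hsupport (j : ℕ) (hj : j ∉ Finset.range (n + 1)) :
        a j * (η ^ n / (n.factorial : ℝ)) * bellPartial n j x = 0 := by
      rw [bellPartial_eq_zero_of_lt x (by simpa using hj), mul_zero]
    simpa only [Finset.mul_sum, mul_left_comm, mul_assoc] using
      hasSum_sum_of_ne_finset_zero (L := SummationFilter.unconditional ℕ) hsupport
  have hdouble := hFubini.hasSum
  rw [← (hdouble.prod_fiberwise hrow).unique hA]
  exact ((Equiv.prodComm ℕ ℕ).hasSum_iff.2 hdouble).prod_fiberwise hcol

end BellPolynomials

section TaylorSeries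

open scoped ENNReal

theorem hasSum_iteratedDeriv_div_factorial_mul_pow {𝕜 : Type*} [NontriviallyNormedField 𝕜]
    [CompleteSpace 𝕜] [CharZero 𝕜] {F : 𝕜 → 𝕜} {p : FormalMultilinearSeries 𝕜 𝕜 𝕜} {y s : 𝕜}
    {r : ℝ≥0∞} (hF : HasFPowerSeriesOnBall F p y r) (hs : s ∈ Metric.eball 0 r) :
    HasSum (fun j : ℕ => iteratedDeriv j F y / (j.factorial : 𝕜) * s ^ j) (F (y + s)) := by
  refine (hF.hasSum_iteratedFDeriv hs).congr_fun fun j => ?_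
  rw [iteratedFDeriv_apply_eq_iteratedDeriv_mul_prod, Finset.prod_const, Finset.card_univ,
    Fintype.card_fin, smul_eq_mul, smul_eq_mul]
  ring

theorem hasFPowerSeriesOnBall_top_of_forall_hasSum {𝕜 : Type*} [RCLike 𝕜] {F : 𝕜 → 𝕜}
    {c : ℕ → 𝕜} {y : 𝕜} (h : ∀ x, HasSum (fun j => c j * (x - y) ^ j) (F x)) :
    HasFPowerSeriesOnBall F (FormalMultilinearSeries.ofScalars 𝕜 c) y ⊤ where
  r_le := by
    refine (ENNReal.eq_top_of_forall_nnreal_le fun r => ?_).ge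
    refine FormalMultilinearSeries.le_radius_of_summable _ ?_
    simpa [FormalMultilinearSeries.ofScalars_norm] using (h (y + (r : ℝ))).summable.norm
  r_pos := ENNReal.zero_lt_top
  hasSum {s} _ := by
    simpa [FormalMultilinearSeries.ofScalars_apply_eq, mul_comm] using h (y + s)

end TaylorSeries

theorem sInf_setOf_apply_lt {α β : Type*} [ConditionallyCompleteLinearOrder α]
    [NoMaxOrder α] [DenselyOrdered α] [Preorder β] {F : α → β} (hF : StrictMono F) (t : α) :
    sInf {x | F t < F x} = t := by
  simp only [hF.lt_iff_lt]
  exact csInf_Ioi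

theorem F_expansion_optimal_transport_general {F : ℝ → ℝ} {y : ℝ}
    {p : FormalMultilinearSeries ℝ ℝ ℝ} {r : ENNReal} (hF : HasFPowerSeriesOnBall F p y r)
    (hFmono : StrictMono F) (hFy : iteratedDeriv 1 F y ≠ 0) {η v S : ℝ} {g : ℕ → ℝ}
    (hg1 : g 1 = iteratedDeriv 2 F y / iteratedDeriv 1 F y)
    (hgk : ∀ k, 2 ≤ k → g k =
      -(∑ j ∈ Finset.Icc 2 k, iteratedDeriv j F y / iteratedDeriv 1 F y * bellPartial k j g)
        + iteratedDeriv (2 * k) F y / iteratedDeriv 1 F y)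
    (hS : HasSum (fun k : ℕ => η ^ (k + 1) / ((k + 1).factorial : ℝ) * g (k + 1)) S)
    (hSr : S ∈ Metric.eball 0 r)
    (hv : HasSum (fun k : ℕ => η ^ k / (k.factorial : ℝ) * iteratedDeriv (2 * k) F y) v)
    (hFubini : Summable fun p : ℕ × ℕ =>
      iteratedDeriv p.1 F y * (η ^ p.2 / (p.2.factorial : ℝ)) * bellPartial p.2 p.1 g) :
    F (y + S) = v ∧ y + S = sInf {x | v < F x} := by
  have hbell (k : ℕ) : ∑ j ∈ Finset.range (k + 1), iteratedDeriv j F y * bellPartial k j g =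
      iteratedDeriv (2 * k) F y := by
    rcases k with _ | _ | k
    · simp [bellPartial_zero_zero]
    · exact sum_range_mul_bellPartial_of_recursion (a := (iteratedDeriv · F y)) hFy
        (by simpa using hg1)
    · exact sum_range_mul_bellPartial_of_recursion (a := (iteratedDeriv · F y)) hFy
        (hgk (k + 2) (by omega))
  have hcomp := hasSum_sum_mul_bellPartial (a := (iteratedDeriv · F y)) hS
    (hasSum_iteratedDeriv_div_factorial_mul_pow hF hSr) hFubini
  simp only [hbell] at hcomp
  obtain rfl := hcomp.unique hv
  exact ⟨rfl, (sInf_setOf_apply_lt hFmono _).symm⟩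

/-- **F-expansion of the optimal transport map.**
In the additive Gaussian model `Y = X + σZ` with `η = σ²/2` and cdfs `F, G` of `X, Y`,
define `g₁ = F⁽²⁾/F⁽¹⁾` and, for `k ≥ 2`,
`g_k = −Σ_{j=2}^k (F⁽ʲ⁾/F⁽¹⁾) B_{k,j}(g₁,…,g_{k−j+1}) + F⁽²ᵏ⁾/F⁽¹⁾`, and set
`T_F(y) = y + Σ_{k≥1} (η^k/k!) g_k(y)`.  Then at every `y` where `T_F(y)` converges
absolutely, `F` equals its everywhere-convergent Taylor series at `y`, `G(y)` has the
absolutely convergent expansion `Σ (η^k/k!) F^{(2k)}(y)` and all rearrangements converge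
absolutely, one has `F(T_F(y)) = G(y)`; in particular `T_F(y) = F⁻¹(G(y))` where
`F⁻¹(t) = inf {x | F x > t}` is the quantile function. -/
theorem F_expansion_optimal_transport
    {Ω : Type*} [MeasureSpace Ω] [IsProbabilityMeasure (ℙ : Measure Ω)]
    (X Z : Ω → ℝ) (hXm : Measurable X) (hZm : Measurable Z)
    (hZlaw : Measure.map Z ℙ = gaussianReal 0 1)
    (hXZ : IndepFun X Z ℙ)
    (σ : ℝ) (hσ : 0 < σ) (η : ℝ) (hη : η = σ ^ 2 / 2)
    (Y : Ω → ℝ) (hY : ∀ ω, Y ω = X ω + σ * Z ω)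
    (F G : ℝ → ℝ)
    (hF : ∀ x, F x = (Measure.map X ℙ (Set.Iic x)).toReal)
    (hG : ∀ x, G x = (Measure.map Y ℙ (Set.Iic x)).toReal)
    (hFsmooth : ContDiff ℝ (⊤ : ℕ∞) F)
    (hFpos : ∀ t, 0 < iteratedDeriv 1 F t)
    (g : ℕ → ℝ → ℝ)
    (hg1 : ∀ t, g 1 t = iteratedDeriv 2 F t / iteratedDeriv 1 F t)
    (hgk : ∀ k, 2 ≤ k → ∀ t, g k t =
      -(∑ j ∈ Finset.Icc 2 k,
          iteratedDeriv j F t / iteratedDeriv 1 F t *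
            bellPartial k j fun m => g m t)
        + iteratedDeriv (2 * k) F t / iteratedDeriv 1 F t)
    (y : ℝ)
    (habs : Summable fun k : ℕ => |η ^ (k + 1) / ((k + 1).factorial : ℝ) * g (k + 1) y|)
    (htaylor : ∀ x : ℝ,
      HasSum (fun j : ℕ => iteratedDeriv j F y / (j.factorial : ℝ) * (x - y) ^ j) (F x))
    (hGexp : HasSum (fun k : ℕ => η ^ k / (k.factorial : ℝ) * iteratedDeriv (2 * k) F y) (G y))
    (hGexpAbs : Summable fun k : ℕ => |η ^ k / (k.factorial : ℝ) * iteratedDeriv (2 * k) F y|)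
    (hFubini : Summable fun p : ℕ × ℕ =>
      |iteratedDeriv p.1 F y * (η ^ p.2 / (p.2.factorial : ℝ)) *
        bellPartial p.2 p.1 fun m => g m y|) :
    F (y + ∑' k : ℕ, η ^ (k + 1) / ((k + 1).factorial : ℝ) * g (k + 1) y) = G y
    ∧ (y + ∑' k : ℕ, η ^ (k + 1) / ((k + 1).factorial : ℝ) * g (k + 1) y)
        = sInf {x : ℝ | G y < F x} :=
  F_expansion_optimal_transport_general (hasFPowerSeriesOnBall_top_of_forall_hasSum htaylor)
    (strictMono_of_deriv_pos fun t => iteratedDeriv_one (f := F) ▸ hFpos t) (hFpos y).ne' (hg1 y)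
    (fun k hk => hgk k hk y) habs.of_abs.hasSum (by simp) hGexp hFubini.of_abs
end
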